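/- For a connected graph G with at least 2 vertices, srd(G) = e(G) if and only if G is isomorphic to the path P_2 on two vertices (a single edge). -/

import Mathlib

/-!
Edge-connectivities satisfy a Gomory–Hu property: fixing a root `r`, one can attach to every other
vertex `w` a minimum cut between `w` and some further vertex, so that these cuts already contain a
minimum cut for every pair of vertices. The cut attached to `w` has at most `deg w` edges, hence
contains at most `(deg w).choose 2` pairs of edges. Two distinct edges share at most one vertex, so
if there are two edges, then for a suitable root `r` the sum of `(deg w).choose 2` over `w ≠ r` is
less than the number of all pairs of edges. Some pair of edges then lies in none of the attached
cuts, and giving these two edges the same color saves a color.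
-/

open SimpleGraph

/-- `F` is an edge-cut of `G` separating `u` and `v`. -/
def CutsBetween {V : Type*} (G : SimpleGraph V) (u v : V) (F : Finset (Sym2 V)) : Prop :=
  ↑F ⊆ G.edgeSet ∧ ¬ (G.deleteEdges ↑F).Reachable u v

/-- `lam G u v` is the minimum number of edges in an edge-cut of `G` separating `u` and `v`. -/
noncomputable def lam {V : Type*} (G : SimpleGraph V) (u v : V) : ℕ :=
  sInf {n | ∃ F : Finset (Sym2 V), CutsBetween G u v F ∧ F.card = n}

/-- `c` is a strong rainbow disconnection coloring of `G`: every pair of distinct vertices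
admits a rainbow minimum edge-cut separating them. -/
def IsSRDColoring {V : Type*} (G : SimpleGraph V) (c : Sym2 V → ℕ) : Prop :=
  ∀ u v : V, u ≠ v → ∃ F : Finset (Sym2 V),
    CutsBetween G u v F ∧ F.card = lam G u v ∧ Set.InjOn c ↑F

/-- The strong rainbow disconnection number of `G`. -/
noncomputable def srd {V : Type*} (G : SimpleGraph V) : ℕ :=
  sInf {k | ∃ c : Sym2 V → ℕ, (∀ e ∈ G.edgeSet, c e < k) ∧ IsSRDColoring G c}

section MinimumCuts

variable {V : Type*} {G : SimpleGraph V} {u v : V} {F : Finset (Sym2 V)}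

theorem CutsBetween.symm (h : CutsBetween G u v F) : CutsBetween G v u F :=
  ⟨h.1, fun hr ↦ h.2 hr.symm⟩

theorem CutsBetween.ne (h : CutsBetween G u v F) : u ≠ v := by
  rintro rfl
  exact h.2 (Reachable.refl u)

theorem CutsBetween.lam_le_card (h : CutsBetween G u v F) : lam G u v ≤ F.card :=
  Nat.sInf_le ⟨F, h, rfl⟩

theorem lam_comm (G : SimpleGraph V) (u v : V) : lam G u v = lam G v u := by
  unfold lam
  congr! 5
  exact and_congr_left' ⟨CutsBetween.symm, CutsBetween.symm⟩

/-- `F` is a minimum edge-cut of `G` separating `u` and `v`, the kind of cut required to be rainbow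
in a strong rainbow disconnection coloring. -/
structure IsMinCut (G : SimpleGraph V) (u v : V) (F : Finset (Sym2 V)) : Prop where
  cutsBetween : CutsBetween G u v F
  card_eq : F.card = lam G u v

theorem IsMinCut.symm (h : IsMinCut G u v F) : IsMinCut G v u F :=
  ⟨h.cutsBetween.symm, h.card_eq.trans (lam_comm G u v)⟩

theorem exists_isMinCut [Finite G.edgeSet] (huv : u ≠ v) : ∃ F, IsMinCut G u v F := by
  have hcut : CutsBetween G u v G.edgeSet.toFinite.toFinset :=
    ⟨by simp, by simpa [deleteEdges_eq_bot.2 subset_rfl, reachable_bot] using huv⟩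
  obtain ⟨F, hF, hcard⟩ := Nat.sInf_mem
    (s := {n | ∃ F : Finset (Sym2 V), CutsBetween G u v F ∧ F.card = n}) ⟨_, _, hcut, rfl⟩
  exact ⟨F, hF, hcard⟩

theorem cutsBetween_incidenceFinset [DecidableEq V] [Fintype (G.neighborSet u)] (huv : u ≠ v) :
    CutsBetween G u v (G.incidenceFinset u) := by
  refine ⟨by simpa using G.incidenceSet_subset u, fun ⟨w⟩ ↦ ?_⟩
  cases w with
  | nil => exact huv rfl
  | cons h _ =>
    rw [deleteEdges_adj] at h
    exact h.2 (by simpa [mk'_mem_incidenceSet_iff] using h.1)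

theorem IsMinCut.card_le_degree [Fintype (G.neighborSet u)] (h : IsMinCut G u v F) :
    F.card ≤ G.degree u := by
  classical
  calc F.card = lam G u v := h.card_eq
    _ ≤ (G.incidenceFinset u).card := (cutsBetween_incidenceFinset h.cutsBetween.ne).lam_le_card
    _ = G.degree u := G.card_incidenceFinset_eq_degree u

end MinimumCuts

section GomoryHu

variable {V : Type*} {G : SimpleGraph V}

/-- `C` attaches to every vertex `w` of `A` other than the root `r` a minimum cut `C w` separating
`w` from some other vertex, and these cuts contain a minimum cut for every pair of distinct vertices
of `A`. This is what remains of a Gomory–Hu tree on `A` rooted at `r` if `C w` is the cut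
represented by the edge from `w` to its parent. The values of `C` outside `A \ {r}` are
irrelevant. -/
structure IsGomoryHuFamily (G : SimpleGraph V) (A : Finset V) (r : V)
    (C : V → Finset (Sym2 V)) : Prop where
  isMinCut : ∀ w ∈ A, w ≠ r → ∃ x, IsMinCut G w x (C w)
  exists_isMinCut : ∀ a ∈ A, ∀ b ∈ A, a ≠ b → ∃ w ∈ A, w ≠ r ∧ IsMinCut G a b (C w)

theorem IsGomoryHuFamily.union [DecidableEq V] {S T : Finset V} {r s : V}
    {C D : V → Finset (Sym2 V)} {F : Finset (Sym2 V)} (hST : Disjoint S T) (hr : r ∈ S)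
    (hs : s ∈ T) (hC : IsGomoryHuFamily G S r C) (hD : IsGomoryHuFamily G T s D)
    (hF : ∀ a ∈ S, ∀ b ∈ T, IsMinCut G a b F) :
    IsGomoryHuFamily G (S ∪ T) r fun w ↦ if w ∈ S then C w else if w = s then F else D w := by
  have hdisj : ∀ w ∈ T, w ∉ S := fun w hT hS ↦ Finset.disjoint_left.1 hST hS hT
  have hsr : s ≠ r := fun h ↦ hdisj s hs (h ▸ hr)
  have hsS : s ∉ S := hdisj s hs
  constructor
  · intro w hw hwr
    rcases Finset.mem_union.1 hw with hwS | hwT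
    · simpa only [hwS, if_true] using hC.isMinCut w hwS hwr
    · by_cases hws : w = s
      · exact ⟨r, by simpa only [hws, hsS, if_true, if_false] using (hF r hr s hs).symm⟩
      · simpa only [hdisj w hwT, hws, if_false] using hD.isMinCut w hwT hws
  · intro a ha b hb hab
    rcases Finset.mem_union.1 ha with haS | haT <;> rcases Finset.mem_union.1 hb with hbS | hbT
    · obtain ⟨w, hwS, hwr, h⟩ := hC.exists_isMinCut a haS b hbS hab
      exact ⟨w, Finset.mem_union_left T hwS, hwr, by simpa only [hwS, if_true] using h⟩
    · exact ⟨s, Finset.mem_union_right S hs, hsr,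
        by simpa only [hsS, if_true, if_false] using hF a haS b hbT⟩
    · exact ⟨s, Finset.mem_union_right S hs, hsr,
        by simpa only [hsS, if_true, if_false] using (hF b hbS a haT).symm⟩
    · obtain ⟨w, hwT, hws, h⟩ := hD.exists_isMinCut a haT b hbT hab
      exact ⟨w, Finset.mem_union_right S hwT, fun h ↦ hdisj w hwT (h ▸ hr),
        by simpa only [hdisj w hwT, hws, if_false] using h⟩

/-- Any minimum cut of a pair of vertices of `A` with least `lam` has this property. -/
theorem exists_cutsBetween_forall_isMinCut [Finite G.edgeSet] {A : Finset V} (hA : A.Nontrivial) :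
    ∃ F, (∃ u ∈ A, ∃ v ∈ A, CutsBetween G u v F) ∧
      ∀ a ∈ A, ∀ b ∈ A, CutsBetween G a b F → IsMinCut G a b F := by
  classical
  have hoff : A.offDiag.Nonempty := by
    rw [← Finset.coe_nonempty, Finset.coe_offDiag]
    exact Set.offDiag_nonempty.2 hA
  obtain ⟨⟨u, v⟩, huv, hmin⟩ := A.offDiag.exists_min_image (fun p ↦ lam G p.1 p.2) hoff
  obtain ⟨hu, hv, hne⟩ := Finset.mem_offDiag.1 huv
  obtain ⟨F, hF⟩ := exists_isMinCut (G := G) hne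
  refine ⟨F, ⟨u, hu, v, hv, hF.cutsBetween⟩, fun a ha b hb hab ↦ ⟨hab, ?_⟩⟩
  refine hab.lam_le_card.antisymm' ?_
  exact hF.card_eq.trans_le (hmin (a, b) (Finset.mem_offDiag.2 ⟨ha, hb, hab.ne⟩))

theorem exists_isGomoryHuFamily (G : SimpleGraph V) [Finite G.edgeSet] (A : Finset V) :
    ∀ r ∈ A, ∃ C, IsGomoryHuFamily G A r C := by
  classical
  induction A using Finset.strongInduction with
  | H A ih =>
  intro r hr
  by_cases hA : A.Nontrivial
  · obtain ⟨F, ⟨u, hu, v, hv, hF⟩, hmin⟩ := exists_cutsBetween_forall_isMinCut (G := G) hA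
    let R : V → Prop := (G.deleteEdges ↑F).Reachable r
    obtain ⟨s, hs, hsR⟩ : ∃ s ∈ A, ¬ R s := by
      by_contra! h
      exact hF.2 ((h u hu).symm.trans (h v hv))
    have hrR : R r := Reachable.refl r
    obtain ⟨C, hC⟩ := ih (A.filter R) (Finset.filter_ssubset.2 ⟨s, hs, hsR⟩) r
      (Finset.mem_filter.2 ⟨hr, hrR⟩)
    obtain ⟨D, hD⟩ := ih (A.filter (¬ R ·)) (Finset.filter_ssubset.2 ⟨r, hr, not_not.2 hrR⟩) s
      (Finset.mem_filter.2 ⟨hs, hsR⟩)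
    have hcross : ∀ a ∈ A.filter R, ∀ b ∈ A.filter (¬ R ·), IsMinCut G a b F := by
      intro a ha b hb
      obtain ⟨ha, haR⟩ := Finset.mem_filter.1 ha
      obtain ⟨hb, hbR⟩ := Finset.mem_filter.1 hb
      exact hmin a ha b hb ⟨hF.1, fun h ↦ hbR (haR.trans h)⟩
    have hCD := hC.union (Finset.disjoint_filter_filter_not A A R)
      (Finset.mem_filter.2 ⟨hr, hrR⟩) (Finset.mem_filter.2 ⟨hs, hsR⟩) hD hcross
    rw [Finset.filter_union_filter_not_eq] at hCD
    exact ⟨_, hCD⟩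
  · have hsub : (A : Set V).Subsingleton := Set.not_nontrivial_iff.1 hA
    exact ⟨fun _ ↦ ∅, fun w hw hwr ↦ absurd (hsub hw hr) hwr,
      fun a ha b hb hab ↦ absurd (hsub ha hb) hab⟩

end GomoryHu

section PairsOfEdges

theorem exists_pair_not_both_mem_of_sum_choose_two_lt {ι α : Type*} {s : Finset ι}
    {C : ι → Finset α} {E : Finset α} (h : ∑ i ∈ s, (C i).card.choose 2 < E.card.choose 2) :
    ∃ e ∈ E, ∃ f ∈ E, e ≠ f ∧ ∀ i ∈ s, ¬ (e ∈ C i ∧ f ∈ C i) := by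
  classical
  have hlt : (s.biUnion fun i ↦ (C i).powersetCard 2).card < (E.powersetCard 2).card := by
    refine Finset.card_biUnion_le.trans_lt ?_
    simpa only [Finset.card_powersetCard] using h
  obtain ⟨P, hPE, hPC⟩ := Finset.exists_mem_notMem_of_card_lt_card hlt
  obtain ⟨hPE, hP⟩ := Finset.mem_powersetCard.1 hPE
  obtain ⟨e, f, hef, rfl⟩ := Finset.card_eq_two.1 hP
  refine ⟨e, hPE (by simp), f, hPE (by simp), hef, fun i hi ⟨he, hf⟩ ↦ hPC ?_⟩
  refine Finset.mem_biUnion.2 ⟨i, hi, Finset.mem_powersetCard.2 ⟨?_, hP⟩⟩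
  simp [Finset.insert_subset_iff, he, hf]

variable {V : Type*} [DecidableEq V]

theorem pairwise_disjoint_powersetCard_two_incidenceFinset (G : SimpleGraph V) [LocallyFinite G] :
    Pairwise (Function.onFun Disjoint fun w ↦ (G.incidenceFinset w).powersetCard 2) := by
  intro a b hab
  refine Finset.disjoint_left.2 fun P ha hb ↦ ?_
  rw [Finset.mem_powersetCard] at ha hb
  have hP : P ⊆ {s(a, b)} := fun x hx ↦ by
    have hxa := (mem_incidenceFinset ..).1 (ha.1 hx)
    have hxb := (mem_incidenceFinset ..).1 (hb.1 hx)
    exact Finset.mem_singleton.2 ((Sym2.mem_and_mem_iff hab).1 ⟨hxa.2, hxb.2⟩)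
  have hcard := Finset.card_le_card hP
  rw [ha.2, Finset.card_singleton] at hcard
  omega

theorem exists_sum_erase_degree_choose_two_lt [Fintype V] {G : SimpleGraph V} [DecidableRel G.Adj]
    (h : 2 ≤ G.edgeFinset.card) :
    ∃ r, ∑ w ∈ Finset.univ.erase r, (G.degree w).choose 2 < G.edgeFinset.card.choose 2 := by
  let pairs (w : V) : Finset (Finset (Sym2 V)) := (G.incidenceFinset w).powersetCard 2
  have hdisj : Pairwise (Function.onFun Disjoint pairs) :=
    pairwise_disjoint_powersetCard_two_incidenceFinset G
  obtain ⟨P, hP⟩ : (G.edgeFinset.powersetCard 2).Nonempty := Finset.powersetCard_nonempty.2 h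
  obtain ⟨r, hr⟩ : ∃ r, ∀ w, w ≠ r → P ∉ pairs w := by
    by_cases hPr : ∃ r, P ∈ pairs r
    · obtain ⟨r, hPr⟩ := hPr
      exact ⟨r, fun w hwr hPw ↦ Finset.disjoint_left.1 (hdisj hwr) hPw hPr⟩
    · obtain ⟨e, -⟩ := Finset.card_pos.1 (two_pos.trans_le h)
      push Not at hPr
      exact ⟨e.out.1, fun w _ ↦ hPr w⟩
  have hss : (Finset.univ.erase r).biUnion pairs ⊂ G.edgeFinset.powersetCard 2 := by
    refine (Finset.ssubset_iff_of_subset ?_).2 ⟨P, hP, ?_⟩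
    · exact Finset.biUnion_subset.2 fun w _ ↦
        Finset.powersetCard_mono (G.incidenceFinset_subset w)
    · simpa using hr
  refine ⟨r, ?_⟩
  calc ∑ w ∈ Finset.univ.erase r, (G.degree w).choose 2
      = ((Finset.univ.erase r).biUnion pairs).card := by
        rw [Finset.card_biUnion fun a _ b _ hab ↦ hdisj hab]
        simp only [pairs, Finset.card_powersetCard, card_incidenceFinset_eq_degree]
    _ < (G.edgeFinset.powersetCard 2).card := Finset.card_lt_card hss
    _ = G.edgeFinset.card.choose 2 := Finset.card_powersetCard _ _

end PairsOfEdges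

section Coloring

variable {V : Type*} {G : SimpleGraph V}

theorem exists_isSRDColoring_lt_card_of_mapsTo {α : Type*} {S : Finset α} {c : Sym2 V → α}
    (hS : Set.MapsTo c G.edgeSet S)
    (hc : ∀ u v, u ≠ v → ∃ F, IsMinCut G u v F ∧ Set.InjOn c F) :
    ∃ c' : Sym2 V → ℕ, (∀ e ∈ G.edgeSet, c' e < S.card) ∧ IsSRDColoring G c' := by
  have hcard : (S : Set α).encard ≤ (Finset.range S.card : Set ℕ).encard := by
    simp only [Set.encard_coe_eq_coe_finsetCard, Finset.card_range, le_refl]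
  obtain ⟨i, hiS, hi⟩ := S.finite_toSet.exists_injOn_of_encard_le hcard
  refine ⟨i ∘ c, fun e he ↦ Finset.mem_range.1 (hiS (hS he)), fun u v huv ↦ ?_⟩
  obtain ⟨F, hF, hcF⟩ := hc u v huv
  exact ⟨F, hF.cutsBetween, hF.card_eq, hi.comp hcF fun e he ↦ hS (hF.cutsBetween.1 he)⟩

theorem exists_isSRDColoring_lt_card_edgeFinset (G : SimpleGraph V) [Fintype G.edgeSet] :
    ∃ c : Sym2 V → ℕ, (∀ e ∈ G.edgeSet, c e < G.edgeFinset.card) ∧ IsSRDColoring G c := by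
  refine exists_isSRDColoring_lt_card_of_mapsTo (c := id) (fun e he ↦ mem_edgeFinset.2 he)
    fun u v huv ↦ ?_
  obtain ⟨F, hF⟩ := exists_isMinCut (G := G) huv
  exact ⟨F, hF, Function.injective_id.injOn⟩

theorem srd_le_card_edgeFinset [Fintype G.edgeSet] : srd G ≤ G.edgeFinset.card :=
  Nat.sInf_le (exists_isSRDColoring_lt_card_edgeFinset G)

theorem srd_pos [Finite G.edgeSet] (h : G.edgeSet.Nonempty) : 0 < srd G := by
  have := Fintype.ofFinite G.edgeSet
  obtain ⟨e, he⟩ := h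
  obtain ⟨c, hc, -⟩ := Nat.sInf_mem
    (s := {k | ∃ c : Sym2 V → ℕ, (∀ e ∈ G.edgeSet, c e < k) ∧ IsSRDColoring G c})
    ⟨_, exists_isSRDColoring_lt_card_edgeFinset G⟩
  exact (Nat.zero_le _).trans_lt (hc e he)

theorem injOn_update_id {α : Type*} [DecidableEq α] {s : Set α} {a b : α}
    (h : ¬ (a ∈ s ∧ b ∈ s)) : Set.InjOn (Function.update id a b) s := by
  intro x hx y hy hxy
  grind [Function.update_apply]

theorem srd_lt_card_edgeFinset [Fintype V] [DecidableRel G.Adj]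
    (h : 2 ≤ G.edgeFinset.card) : srd G < G.edgeFinset.card := by
  classical
  obtain ⟨r, hr⟩ := exists_sum_erase_degree_choose_two_lt h
  obtain ⟨C, hC⟩ := exists_isGomoryHuFamily G Finset.univ r (Finset.mem_univ r)
  have hdeg : ∀ w ∈ Finset.univ.erase r, (C w).card ≤ G.degree w := fun w hw ↦ by
    obtain ⟨x, hx⟩ := hC.isMinCut w (Finset.mem_univ w) (Finset.ne_of_mem_erase hw)
    exact hx.card_le_degree
  obtain ⟨e, he, f, hf, hef, hnot⟩ := exists_pair_not_both_mem_of_sum_choose_two_lt <|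
    (Finset.sum_le_sum fun w hw ↦ Nat.choose_le_choose 2 (hdeg w hw)).trans_lt hr
  suffices srd G ≤ (G.edgeFinset.erase e).card from
    this.trans_lt (Finset.card_erase_lt_of_mem he)
  refine Nat.sInf_le
    (exists_isSRDColoring_lt_card_of_mapsTo (c := Function.update id e f) ?_ fun u v huv ↦ ?_)
  · intro x hx
    by_cases hxe : x = e
    · simpa [hxe, hef.symm] using hf
    · simpa [hxe] using hx
  · obtain ⟨w, -, hwr, hF⟩ := hC.exists_isMinCut u (Finset.mem_univ u) v (Finset.mem_univ v) huv
    exact ⟨C w, hF, injOn_update_id (hnot w (by simpa using hwr))⟩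

end Coloring

section TwoVertices

variable {V : Type*} [Fintype V] {G : SimpleGraph V}

theorem eq_top_of_choose_two_le_card_edgeFinset [Fintype G.edgeSet]
    (h : (Fintype.card V).choose 2 ≤ G.edgeFinset.card) : G = ⊤ := by
  classical
  refine edgeFinset_inj.1 (Finset.eq_of_subset_of_card_le (edgeFinset_mono le_top) ?_)
  rwa [card_edgeFinset_top_eq_card_choose_two]

theorem card_edgeSet_le_one_iff_nonempty_iso_pathGraph_two (hV : 2 ≤ Fintype.card V)
    (hG : G.Connected) :
    Nat.card G.edgeSet ≤ 1 ↔ Nonempty (G ≃g pathGraph 2) := by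
  classical
  have hle := hG.card_vert_le_card_edgeSet_add_one
  simp only [Nat.card_eq_fintype_card, ← edgeFinset_card] at hle ⊢
  rw [pathGraph_two_eq_top]
  constructor
  · intro h
    have hV2 : Fintype.card V = 2 := by omega
    have htop : G = ⊤ := eq_top_of_choose_two_le_card_edgeFinset <| by
      rw [hV2, Nat.choose_self]
      omega
    rw [htop]
    exact ⟨Iso.completeGraph (Fintype.equivFinOfCardEq hV2)⟩
  · rintro ⟨φ⟩
    rw [φ.card_edgeFinset_eq, card_edgeFinset_top_eq_card_choose_two]
    simp

end TwoVertices

theorem stmt2_general {V : Type*} [Finite V] (G : SimpleGraph V) :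
    srd G = Nat.card G.edgeSet ↔ Nat.card G.edgeSet ≤ 1 := by
  classical
  have := Fintype.ofFinite V
  rw [Nat.card_eq_fintype_card, ← edgeFinset_card]
  constructor
  · intro h
    by_contra! h2
    exact (srd_lt_card_edgeFinset h2).ne h
  · intro h
    refine srd_le_card_edgeFinset.antisymm ?_
    rcases G.edgeFinset.eq_empty_or_nonempty with hE | hE
    · simp [hE]
    · exact h.trans (srd_pos (by simpa using hE))

theorem stmt2 {V : Type*} [Fintype V] (G : SimpleGraph V) (hV : 2 ≤ Fintype.card V)
    (hG : G.Connected) :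
    srd G = Nat.card G.edgeSet ↔ Nonempty (G ≃g SimpleGraph.pathGraph 2) :=
  (stmt2_general G).trans (card_edgeSet_le_one_iff_nonempty_iso_pathGraph_two hV hG)
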